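/- (Theorem 2.) Let d ≥ 1, let w ∈ ℝ^d with w ≠ 0, b ∈ ℝ, ε > 0, δ ≥ 0, and consider balanced Gaussian mixture data with means μ₊, μ₋ and σ > 0, with μ = (μ₊ − μ₋)/2 ≠ 0 and μ₀ = μ/‖μ‖₂. Assume w·μ₀ ≥ 0 and set cos θ = (w·μ₀)/‖w‖₂, sin θ = √(1 − cos²θ), β = min(ε cos θ, δ), and g(ε, δ, θ) = β cos θ + √(ε² − β²) sin θ. Define the overall strong-adversarial rate p_{s-adv} = (1/2)·P_{N(μ₊,σ²I_d)}({x : w·x + b > 0 and there exists v with ‖v‖₂ ≤ ε, |v·μ₀| ≤ δ, and w·(x+v) + b ≤ 0}) + (1/2)·P_{N(μ₋,σ²I_d)}({x : w·x + b ≤ 0 and there exists v with ‖v‖₂ ≤ ε, |v·μ₀| ≤ δ, and w·(x+v) + b > 0}). Then p_{s-adv} = 1 − p_m − (1/2)[Φ((w·μ + b')/(‖w‖₂σ) − g(ε,δ,θ)/σ) + Φ((w·μ − b')/(‖w‖₂σ) − g(ε,δ,θ)/σ)], where p_m = 1 − (1/2)[Φ((w·μ + b')/(‖w‖₂σ)) +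 Φ((w·μ − b')/(‖w‖₂σ))]. -/

import Mathlib

open MeasureTheory ProbabilityTheory
open scoped ENNReal NNReal

/-- Euclidean inner product on `ℝ^d`. -/
noncomputable def dotp {d : ℕ} (w x : Fin d → ℝ) : ℝ := ∑ i, w i * x i

/-- The `ℓ₂` norm on `ℝ^d`. -/
noncomputable def l2 {d : ℕ} (w : Fin d → ℝ) : ℝ := Real.sqrt (∑ i, (w i)^2)

/-- The product Gaussian measure `N(m, σ²I_d)` on `ℝ^d`. -/
noncomputable def gaussPi {d : ℕ} (m : Fin d → ℝ) (σ : ℝ) : Measure (Fin d → ℝ) :=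
  Measure.pi fun i => gaussianReal (m i) ((σ^2).toNNReal)

/-- The standard normal cumulative distribution function `Φ`. -/
noncomputable def Phi (x : ℝ) : ℝ := ((gaussianReal 0 1) (Set.Iic x)).toReal

/-- The `ℓp` norm on `ℝ^d` for `p ∈ [1,∞]` (as an extended real exponent). -/
noncomputable def lpnorm {d : ℕ} (p : ℝ≥0∞) (v : Fin d → ℝ) : ℝ :=
  if p = ∞ then ⨆ i, |v i| else (∑ i, |v i| ^ p.toReal) ^ (1 / p.toReal)

/-- The `ℓp` norm on `ℝ^d` for a real exponent `p ∈ [1,∞)`. -/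
noncomputable def lpR {d : ℕ} (p : ℝ) (v : Fin d → ℝ) : ℝ := (∑ i, |v i| ^ p) ^ (1/p)

lemma aux_sq_le {x y : ℝ} (h : x^2 ≤ y^2) (hy : 0 ≤ y) : x ≤ y :=
  (le_abs_self x).trans (abs_le_of_sq_le_sq h hy)

lemma dotp_comm' {d : ℕ} (x y : Fin d → ℝ) : dotp x y = dotp y x := by
  simp [dotp, mul_comm]

lemma dotp_add' {d : ℕ} (w x y : Fin d → ℝ) : dotp w (x + y) = dotp w x + dotp w y := by
  simp [dotp, mul_add, Finset.sum_add_distrib]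

lemma dotp_smul' {d : ℕ} (w x : Fin d → ℝ) (c : ℝ) : dotp w (c • x) = c * dotp w x := by
  simp only [dotp, Finset.mul_sum, Pi.smul_apply, smul_eq_mul]
  exact Finset.sum_congr rfl fun i _ => by ring

lemma dotp_sub' {d : ℕ} (w x y : Fin d → ℝ) : dotp w (x - y) = dotp w x - dotp w y := by
  simp [dotp, mul_sub, Finset.sum_sub_distrib]

lemma l2_sq {d : ℕ} (v : Fin d → ℝ) : l2 v ^ 2 = dotp v v := by
  rw [l2, Real.sq_sqrt (Finset.sum_nonneg fun i _ => sq_nonneg _)]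
  simp [dotp, sq]

lemma l2_nonneg {d : ℕ} (v : Fin d → ℝ) : 0 ≤ l2 v := Real.sqrt_nonneg _

lemma l2_pos {d : ℕ} (v : Fin d → ℝ) (hv : v ≠ 0) : 0 < l2 v := by
  apply Real.sqrt_pos.2
  obtain ⟨i, hi⟩ := Function.ne_iff.1 hv
  exact Finset.sum_pos' (fun i _ => sq_nonneg _) ⟨i, Finset.mem_univ _, lt_of_le_of_ne (sq_nonneg _) (Ne.symm (pow_ne_zero 2 hi))⟩

lemma dotp_cs {d : ℕ} (x y : Fin d → ℝ) : dotp x y ^ 2 ≤ dotp x x * dotp y y := by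
  have := Finset.sum_mul_sq_le_sq_mul_sq Finset.univ x y
  simpa [dotp, sq] using this

lemma map_partial {d : ℕ} (m w : Fin d → ℝ) (σ : ℝ) (s : Finset (Fin d)) :
    (gaussPi m σ).map (∑ i ∈ s, fun x : Fin d → ℝ => w i * x i) =
      gaussianReal (∑ i ∈ s, w i * m i) (∑ i ∈ s, ((w i * σ)^2).toNNReal) := by
  have hprob : IsProbabilityMeasure (gaussPi m σ) := by unfold gaussPi; infer_instance
  have hind : iIndepFun (fun (i : Fin d) (x : Fin d → ℝ) => w i * x i) (gaussPi m σ) := by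
    unfold gaussPi
    exact iIndepFun_pi (X := fun i (t : ℝ) => w i * t) (fun i => by fun_prop)
  have hmeas : ∀ i, Measurable (fun x : Fin d → ℝ => w i * x i) := fun i => by fun_prop
  induction s using Finset.induction_on with
  | empty =>
    simp only [Finset.sum_empty, gaussianReal_zero_var]
    rw [show (0 : (Fin d → ℝ) → ℝ) = fun _ => 0 from rfl, Measure.map_const]
    simp
  | insert a s ha ih =>
    rw [Finset.sum_insert ha, Finset.sum_insert ha, Finset.sum_insert ha]
    refine gaussianReal_add_gaussianReal_of_indepFun ?_ ?_ ih
    · exact (hind.indepFun_finset_sum_of_notMem hmeas ha).symm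
    · have h1 : (gaussPi m σ).map (fun x : Fin d → ℝ => x a) = gaussianReal (m a) ((σ^2).toNNReal) := by
        unfold gaussPi
        exact (measurePreserving_eval _ a).map_eq
      have h2 : (fun x : Fin d → ℝ => w a * x a) = (fun t => w a * t) ∘ (fun x : Fin d → ℝ => x a) := rfl
      rw [h2, ← Measure.map_map (by fun_prop) (by fun_prop), h1, gaussianReal_map_const_mul]
      congr 1
      ext
      simp [Real.coe_toNNReal _ (sq_nonneg _), mul_pow]
      positivity

lemma map_dotp {d : ℕ} (m w : Fin d → ℝ) (σ : ℝ) :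
    (gaussPi m σ).map (dotp w) = gaussianReal (dotp w m) (((l2 w * σ)^2).toNNReal) := by
  have h := map_partial m w σ Finset.univ
  convert h using 2
  · ext x; simp [dotp]
  · rfl
  · apply NNReal.coe_injective
    rw [Real.coe_toNNReal _ (sq_nonneg _), mul_pow, l2_sq]
    push_cast
    simp only [Real.coe_toNNReal _ (sq_nonneg _), dotp, Finset.sum_mul]
    exact Finset.sum_congr rfl fun i _ => by ring

lemma Phi_neg (x : ℝ) : Phi (-x) = 1 - Phi x := by
  have : NullSingletonClass (gaussianReal 0 1) := nullSingletonClass_gaussianReal one_ne_zero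
  have h : (gaussianReal 0 1) (Set.Iic (-x)) = (gaussianReal 0 1) (Set.Ici x) := by
    conv_lhs => rw [← neg_zero, ← gaussianReal_map_neg]
    rw [Measure.map_apply (by fun_prop) measurableSet_Iic]
    congr 1
    ext t; simp
  have h2 := prob_compl_eq_one_sub (μ := gaussianReal 0 1) (measurableSet_Iic (a := x))
  rw [Set.compl_Iic] at h2
  unfold Phi
  rw [h, measure_congr (Ioi_ae_eq_Ici (μ := gaussianReal 0 1) (a := x)).symm, h2,
    ENNReal.toReal_sub_of_le prob_le_one (by simp)]
  simp

lemma gauss_Iic (m s t : ℝ) (hs : 0 < s) :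
    (gaussianReal m ((s^2).toNNReal)).real (Set.Iic t) = Phi ((t - m) / s) := by
  have h : gaussianReal m ((s^2).toNNReal) = (gaussianReal 0 1).map ((fun x => x + m) ∘ fun x => s * x) := by
    rw [← Measure.map_map (by fun_prop) (by fun_prop), gaussianReal_map_const_mul,
      gaussianReal_map_add_const]
    congr 1
    · simp
    · ext; simp [Real.coe_toNNReal _ (sq_nonneg _)]
  rw [h, measureReal_def, Measure.map_apply (by fun_prop) measurableSet_Iic, Phi]
  congr 2
  ext x
  simp only [Set.mem_preimage, Function.comp, Set.mem_Iic]
  rw [le_div_iff₀ hs]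
  constructor <;> intro <;> linarith

lemma gauss_Ioc {d : ℕ} (m w : Fin d → ℝ) (σ l u : ℝ) (hs : 0 < l2 w * σ) (hlu : l ≤ u) :
    ((gaussPi m σ) {x | l < dotp w x ∧ dotp w x ≤ u}).toReal =
      Phi ((u - dotp w m) / (l2 w * σ)) - Phi ((l - dotp w m) / (l2 w * σ)) := by
  have hm : Measurable (dotp w : (Fin d → ℝ) → ℝ) := by unfold dotp; fun_prop
  have h : (gaussPi m σ) {x | l < dotp w x ∧ dotp w x ≤ u} =
      ((gaussPi m σ).map (dotp w)) (Set.Iic u \ Set.Iic l) := by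
    rw [Measure.map_apply hm (by measurability)]
    congr 1
    ext x; simp [and_comm]
  rw [h, map_dotp, ← gauss_Iic _ _ _ hs, ← gauss_Iic _ _ _ hs, ← measureReal_def,
    measureReal_diff (Set.Iic_subset_Iic.2 hlu) measurableSet_Iic]

lemma planar_bound (ε δ c s a k β g : ℝ) (hε : 0 < ε) (hδ : 0 ≤ δ) (hc : 0 ≤ c) (hs : 0 ≤ s)
    (hcs : c^2 + s^2 = 1) (ha : a ≤ δ) (hk : 0 ≤ k) (hak : a^2 + k^2 ≤ ε^2)
    (hβ : β = min (ε * c) δ) (hg : g = β * c + Real.sqrt (ε^2 - β^2) * s) :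
    c * a + s * k ≤ g := by
  rcases le_or_gt (ε * c) δ with h | h
  · rw [min_eq_left h] at hβ
    have h1 : Real.sqrt (ε^2 - β^2) = ε * s := by
      rw [show ε^2 - β^2 = (ε * s)^2 by rw [hβ]; linear_combination (-ε^2) * hcs]
      exact Real.sqrt_sq (by positivity)
    have h2 : g = ε := by rw [hg, h1, hβ]; linear_combination ε * hcs
    rw [h2]
    apply aux_sq_le _ hε.le
    nlinarith [sq_nonneg (c * k - s * a)]
  · rw [min_eq_right h.le] at hβ
    subst hβ
    have h0 : (ε * s)^2 < ε^2 - β^2 := by nlinarith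
    have h1 : 0 < ε^2 - β^2 := lt_of_le_of_lt (sq_nonneg _) h0
    have hh := Real.sq_sqrt h1.le
    have hhpos := Real.sqrt_pos.2 h1
    set h' := Real.sqrt (ε^2 - β^2)
    have h2 : ε * s ≤ h' := Real.le_sqrt_of_sq_le h0.le
    have h3 : β * s ≤ c * h' := by
      calc β * s ≤ (ε * c) * s := by gcongr
        _ = c * (ε * s) := by ring
        _ ≤ c * h' := by gcongr
    have h4 : a * β + k * h' ≤ β^2 + h'^2 := by nlinarith [sq_nonneg (a - β), sq_nonneg (k - h')]
    rw [hg]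
    have h5 : h' * (c * a + s * k) ≤ h' * (β * c + h' * s) := by
      nlinarith [mul_le_mul_of_nonneg_left h4 hs, mul_le_mul_of_nonneg_left h3 (sub_nonneg.2 ha)]
    exact le_of_mul_le_mul_left h5 hhpos

lemma attack {d : ℕ} (w e : Fin d → ℝ) (W ε δ c s β g : ℝ) (hW : 0 < W) (hww : dotp w w = W^2)
    (hee : dotp e e = 1) (hwe : dotp w e = W * c) (hc : 0 ≤ c) (hε : 0 < ε) (hδ : 0 ≤ δ)
    (hs : s = Real.sqrt (1 - c^2))
    (hβ : β = min (ε * c) δ) (hg : g = β * c + Real.sqrt (ε^2 - β^2) * s) :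
    0 ≤ g ∧ (∀ v, l2 v ≤ ε → |dotp v e| ≤ δ → dotp w v ≤ W * g) ∧
      ∃ v, l2 v ≤ ε ∧ |dotp v e| ≤ δ ∧ dotp w v = W * g := by
  have hc1 : c^2 ≤ 1 := by
    have := dotp_cs w e
    rw [hwe, hww, hee] at this
    have hW2 : 0 < W^2 := by positivity
    nlinarith
  have hs0 : 0 ≤ s := hs ▸ Real.sqrt_nonneg _
  have hcs : c^2 + s^2 = 1 := by rw [hs, Real.sq_sqrt (by linarith)]; ring
  have hβ0 : 0 ≤ β := by rw [hβ]; exact le_min (by positivity) hδ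
  have hβε : β ≤ ε := by
    rw [hβ]; refine (min_le_left _ _).trans ?_
    nlinarith
  have hβδ : β ≤ δ := hβ ▸ min_le_right _ _
  have hr : 0 ≤ ε^2 - β^2 := by nlinarith
  set k := Real.sqrt (ε^2 - β^2) with hk
  have hk0 : 0 ≤ k := Real.sqrt_nonneg _
  have hk2 : k^2 = ε^2 - β^2 := Real.sq_sqrt hr
  -- component of w orthogonal to e
  set r : Fin d → ℝ := w - (W * c) • e with hrdef
  have hre : dotp r e = 0 := by
    rw [dotp_comm', hrdef, dotp_sub', dotp_smul', dotp_comm' e w, hwe, hee]; ring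
  have hrw : dotp w r = (W * s)^2 := by
    rw [hrdef, dotp_sub', dotp_smul', hww, hwe]; linear_combination (-W^2) * hcs
  have hrr : dotp r r = (W * s)^2 := by
    conv_lhs => rw [hrdef, dotp_sub', dotp_smul', ← hrdef, hre, dotp_comm', hrw]
    ring
  refine ⟨by rw [hg]; positivity, ?_, ?_⟩
  · intro v hv hve
    set a := dotp v e with ha
    set q : Fin d → ℝ := v - a • e with hq
    have hvv : dotp v v ≤ ε^2 := by rw [← l2_sq]; exact pow_le_pow_left₀ (l2_nonneg v) hv 2
    have hqe : dotp e q = 0 := by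
      rw [hq, dotp_sub', dotp_smul', dotp_comm' e v, hee]; ring
    have hqq : dotp q q = dotp v v - a^2 := by
      conv_lhs => rw [hq, dotp_sub', dotp_smul', ← hq, dotp_comm' q e, hqe, dotp_comm' q v, hq, dotp_sub', dotp_smul']
      ring
    have hwv : dotp w v = W * c * a + dotp r q := by
      have : dotp r q = dotp w q := by
        rw [dotp_comm' r q, hrdef, dotp_sub', dotp_smul', dotp_comm' q e, hqe, dotp_comm' q w]; ring
      rw [this, hq, dotp_sub', dotp_smul', hwe]; ring
    have hqn : dotp r q ≤ W * s * l2 q := by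
      have := dotp_cs r q
      rw [hrr, ← l2_sq, ← mul_pow] at this
      exact aux_sq_le this (mul_nonneg (by positivity) (l2_nonneg q))
    have := planar_bound ε δ c s a (l2 q) β g hε hδ hc hs0 hcs ((le_abs_self _).trans hve)
      (l2_nonneg q) (by rw [l2_sq, hqq]; linarith) hβ hg
    rw [hwv]
    nlinarith
  · refine ⟨β • e + (k * (W * s)⁻¹) • r, ?_, ?_, ?_⟩
    · refine aux_sq_le ?_ hε.le
      rw [l2_sq, dotp_add', dotp_smul', dotp_smul', dotp_comm' _ e, dotp_comm' _ r, dotp_add', dotp_add',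
        dotp_smul', dotp_smul', dotp_smul', dotp_smul', dotp_comm' e r, hre, hee, hrr]
      rcases eq_or_lt_of_le hs0 with h | h
      · rw [← h]; simp; nlinarith
      · have : W * s ≠ 0 := by positivity
        field_simp
        apply le_of_eq
        linear_combination W * s * hk2
    · rw [dotp_comm', dotp_add', dotp_smul', dotp_smul', dotp_comm' e r, hre, hee]
      simpa [abs_of_nonneg hβ0] using hβδ
    · rw [dotp_add', dotp_smul', dotp_smul', hwe, hrw, hg]
      rcases eq_or_lt_of_le hs0 with h | h
      · rw [← h]; simp; ring
      · have : W * s ≠ 0 := by positivity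
        field_simp

/-- Theorem 2: the overall strong-adversarial rate of a linear
classifier for balanced Gaussian mixture data. -/
theorem strong_adversarial_rate {d : ℕ} (hd : 1 ≤ d)
    (w : Fin d → ℝ) (hw : w ≠ 0) (b ε δ : ℝ) (hε : 0 < ε) (hδ : 0 ≤ δ)
    (μp μm : Fin d → ℝ) (σ : ℝ) (hσ : 0 < σ)
    (μ μbar μ₀ : Fin d → ℝ) (b' : ℝ)
    (hμ : μ = (1/2 : ℝ) • (μp - μm)) (hμne : μ ≠ 0) (hμ₀ : μ₀ = (l2 μ)⁻¹ • μ)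
    (hμbar : μbar = (1/2 : ℝ) • (μp + μm)) (hb' : b' = dotp w μbar + b)
    (hwμ₀ : 0 ≤ dotp w μ₀)
    (cosθ sinθ β g : ℝ)
    (hcos : cosθ = dotp w μ₀ / l2 w)
    (hsin : sinθ = Real.sqrt (1 - cosθ^2))
    (hβ : β = min (ε * cosθ) δ)
    (hg : g = β * cosθ + Real.sqrt (ε^2 - β^2) * sinθ)
    (psadv pm : ℝ)
    (hpsadv : psadv =
        (1/2) * ((gaussPi μp σ) {x : Fin d → ℝ | 0 < dotp w x + b ∧
            ∃ v : Fin d → ℝ, l2 v ≤ ε ∧ |dotp v μ₀| ≤ δ ∧ dotp w (x + v) + b ≤ 0}).toReal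
      + (1/2) * ((gaussPi μm σ) {x : Fin d → ℝ | dotp w x + b ≤ 0 ∧
            ∃ v : Fin d → ℝ, l2 v ≤ ε ∧ |dotp v μ₀| ≤ δ ∧ 0 < dotp w (x + v) + b}).toReal)
    (hpm : pm = 1 - (1/2) * (Phi ((dotp w μ + b') / (l2 w * σ)) +
                              Phi ((dotp w μ - b') / (l2 w * σ)))) :
    psadv = 1 - pm - (1/2) * (Phi ((dotp w μ + b') / (l2 w * σ) - g / σ) +
                               Phi ((dotp w μ - b') / (l2 w * σ) - g / σ)) := by
  have hW := l2_pos w hw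
  have hM := l2_pos μ hμne
  have hee : dotp μ₀ μ₀ = 1 := by
    rw [hμ₀, dotp_smul', dotp_comm', dotp_smul', ← l2_sq]
    field_simp
  have hwe : dotp w μ₀ = l2 w * cosθ := by rw [hcos]; field_simp
  have hc : 0 ≤ cosθ := by rw [hcos]; positivity
  obtain ⟨hg0, hub, v₀, hv1, hv2, hv3⟩ := attack w μ₀ (l2 w) ε δ cosθ sinθ β g hW (l2_sq w).symm hee
    hwe hc hε hδ hsin hβ hg
  have hWs : 0 < l2 w * σ := by positivity
  have hneg : ∀ y z : Fin d → ℝ, dotp y (-z) = - dotp y z := fun y z => by simp [dotp]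
  have hl2neg : ∀ v : Fin d → ℝ, l2 (-v) = l2 v := fun v => by simp [l2]
  have hneg' : ∀ y z : Fin d → ℝ, dotp (-y) z = - dotp y z := fun y z => by simp [dotp]
  have hWg : 0 ≤ l2 w * g := by positivity
  have hA : {x : Fin d → ℝ | 0 < dotp w x + b ∧
      ∃ v : Fin d → ℝ, l2 v ≤ ε ∧ |dotp v μ₀| ≤ δ ∧ dotp w (x + v) + b ≤ 0} =
      {x | -b < dotp w x ∧ dotp w x ≤ l2 w * g - b} := by
    ext x
    simp only [Set.mem_setOf_eq]
    constructor
    · rintro ⟨h, v, h1, h2, h3⟩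
      have := hub (-v) (by rwa [hl2neg]) (by rwa [hneg', abs_neg])
      rw [hneg] at this
      rw [dotp_add'] at h3
      constructor <;> linarith
    · rintro ⟨h, h'⟩
      refine ⟨by linarith, -v₀, by rwa [hl2neg], by rwa [hneg', abs_neg], ?_⟩
      rw [dotp_add', hneg, hv3]; linarith
  have hB : {x : Fin d → ℝ | dotp w x + b ≤ 0 ∧
      ∃ v : Fin d → ℝ, l2 v ≤ ε ∧ |dotp v μ₀| ≤ δ ∧ 0 < dotp w (x + v) + b} =
      {x | -(l2 w * g) - b < dotp w x ∧ dotp w x ≤ -b} := by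
    ext x
    simp only [Set.mem_setOf_eq]
    constructor
    · rintro ⟨h, v, h1, h2, h3⟩
      have := hub v h1 h2
      rw [dotp_add'] at h3
      constructor <;> linarith
    · rintro ⟨h, h'⟩
      refine ⟨by linarith, v₀, hv1, hv2, ?_⟩
      rw [dotp_add', hv3]; linarith
  have hwm : dotp w μ = (dotp w μp - dotp w μm) / 2 := by
    rw [hμ, dotp_smul', dotp_sub']; ring
  have hwb : b' = (dotp w μp + dotp w μm) / 2 + b := by
    rw [hb', hμbar, dotp_smul', dotp_add']; ring
  rw [hA, hB, gauss_Ioc _ _ _ _ _ hWs (by linarith), gauss_Ioc _ _ _ _ _ hWs (by linarith)] at hpsadv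
  have e1 : (l2 w * g - b - dotp w μp) / (l2 w * σ) =
      -((dotp w μ + b') / (l2 w * σ) - g / σ) := by
    rw [hwm, hwb]; field_simp; ring
  have e2 : (-b - dotp w μp) / (l2 w * σ) = -((dotp w μ + b') / (l2 w * σ)) := by
    rw [hwm, hwb]; field_simp; ring
  have e3 : (-b - dotp w μm) / (l2 w * σ) = (dotp w μ - b') / (l2 w * σ) := by
    rw [hwm, hwb]; field_simp; ring
  have e4 : (-(l2 w * g) - b - dotp w μm) / (l2 w * σ) =
      (dotp w μ - b') / (l2 w * σ) - g / σ := by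
    rw [hwm, hwb]; field_simp; ring
  rw [e1, e2, e3, e4, Phi_neg, Phi_neg] at hpsadv
  rw [hpsadv, hpm]
  ring
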